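/- arXiv:1802.02328 — 4 statements merged into one kernel-verified Lean document; each statement's English description precedes it below -/
import Mathlib

section
/- Combined a posteriori error bound (Proposition 3). Suppose (y^k)_{k=0..K} ⊂ Y, (p^k)_{k=1..K+1} ⊂ Y and controls u^0, u^1,…,u^K ∈ U satisfy the combined optimality system: y^0 = u^0; m(y^k − y^{k−1}, φ) + τ a(y^k, φ) = τ b(u^k, φ) + τ f(φ) for all φ ∈ Y and k = 1,…,K; p^{K+1} = 0; m(φ, p^k − p^{k+1}) + τ a(φ, p^k) = τ (z_d^k − C y^k, C φ)_D for all φ ∈ Y and k = 1,…,K; (u^k − u_d^k, ψ)_U − b(ψ, p^k) = 0 for all ψ ∈ U and k = 1,…,K; and (u^0 − u_d^0, ψ)_U − m(ψ, p^1) = 0 for all ψ ∈ U. Let (y_N^k)_{k=0..K} ⊂ Y, (p_N^k)_{k=1..K+1} ⊂ Y and u_N^0, u_N^1,…,u_N^K ∈ U be any candidate with y_N^0 = u_N^0 and p_N^{K+1} = 0, and define the residuals r̃_y^k(φ) = f(φ) + b(u_N^k, φ) − a(y_N^k, φ) − (1/τ) m(y_N^k − y_N^{k−1}, φ), r̃_p^k(φ)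 = (z_d^k − C y_N^k, C φ)_D − a(φ, p_N^k) − (1/τ) m(φ, p_N^k − p_N^{k+1}) for φ ∈ Y, r̃_u^k(ψ) = b(ψ, p_N^k) − (u_N^k − u_d^k, ψ)_U and r_u^0(ψ) = m(ψ, p_N^1) − (u_N^0 − u_d^0, ψ)_U for ψ ∈ U, and set R̃_y = (τ Σ_{k=1}^K ‖r̃_y^k‖_{Y'}²)^{1/2}, R̃_p = (τ Σ_{k=1}^K ‖r̃_p^k‖_{Y'}²)^{1/2}, R̃_u = (τ Σ_{k=1}^K ‖r̃_u^k‖_{U'}²)^{1/2}. Then (‖u^0 − u_N^0‖_U² + τ Σ_{k=1}^K ‖u^k − u_N^k‖_U²)^{1/2} ≤ c₁ + √(c₁² + c₂), where c₁ = (1/2)[(‖r_u^0‖_{U'}² + R̃_u²)^{1/2} + (2 γ_b²/α_LB² + 1/α_LB)^{1/2} R̃_p] and c₂ = (2√2/α_LB) R̃_y R̃_p + (γ_c²/(2 α_LB²)) R̃_y². -/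
set_option autoImplicit false

open Finset RealInnerProductSpace

/-- Dual norm of a functional `r` over the nonzero elements of `S`,
with respect to the norm function `nrm`. -/
noncomputable def dualNorm {Y : Type*} [Zero Y] (nrm : Y → ℝ) (S : Set Y) (r : Y → ℝ) : ℝ :=
  sSup {x : ℝ | ∃ v ∈ S, v ≠ 0 ∧ x = r v / nrm v}

/-! The errors `y - yN`, `p - pN`, `u - uN` again solve a coupled forward-backward system, driven by
the residuals alone. Testing the state equation with the adjoint, the adjoint equation with the
state and subtracting cancels `a`: the squared control error plus the squared observation `Z ^ 2` of
the state error equals the residuals applied to the errors. The energy estimates of the two implicit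
Euler schemes bound the state error by the control error and the adjoint error by `Z`; Young's
inequality absorbs `Z` into `Z ^ 2`, and what remains is a quadratic inequality
`E ^ 2 ≤ 2 * c1 * E + c2` for the control error `E`. -/

section Scalar

lemma le_add_sqrt_of_sq_le {x c d : ℝ} (h : x ^ 2 ≤ 2 * c * x + d) : x ≤ c + √(c ^ 2 + d) := by
  have completed_square : (x - c) ^ 2 ≤ c ^ 2 + d := by linarith
  exact sub_le_iff_le_add'.mp (Real.le_sqrt_of_sq_le completed_square)

lemma mul_add_mul_le_sqrt_mul_sqrt (a b c d : ℝ) :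
    a * c + b * d ≤ √(a ^ 2 + b ^ 2) * √(c ^ 2 + d ^ 2) := by
  simpa using Real.sum_mul_le_sqrt_mul_sqrt univ ![a, b] ![c, d]

lemma le_sqrt_mul_add_of_mul_sq_le {α γ x n e r : ℝ} (hα : 0 < α) (hr : 0 ≤ r)
    (h : α * x ^ 2 ≤ n ^ 2 / 2 + (γ * e + r) * x) :
    x ≤ √(2 * γ ^ 2 / α ^ 2 + 1 / α) * √(n ^ 2 + e ^ 2) + √2 * r / α := by
  have young : (α * x) ^ 2 ≤ α * n ^ 2 + 2 * (γ * e) ^ 2 + 2 * r ^ 2 := by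
    linarith [mul_le_mul_of_nonneg_left h hα.le, sq_nonneg (α * x - 2 * (γ * e)),
      sq_nonneg (α * x - 2 * r)]
  have hx : x ^ 2 ≤ (2 * γ ^ 2 / α ^ 2 + 1 / α) * (n ^ 2 + e ^ 2) + (√2 * r / α) ^ 2 := by
    calc x ^ 2 = (α * x) ^ 2 / α ^ 2 := by field_simp
      _ ≤ (α * n ^ 2 + 2 * (γ * e) ^ 2 + 2 * r ^ 2) / α ^ 2 := by gcongr
      _ = 1 / α * n ^ 2 + 2 * γ ^ 2 / α ^ 2 * e ^ 2 + (√2 * r / α) ^ 2 := by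
        rw [div_pow, mul_pow √2, Real.sq_sqrt zero_le_two]
        field_simp
      _ ≤ 1 / α * n ^ 2 + 2 * γ ^ 2 / α ^ 2 * e ^ 2 + (√2 * r / α) ^ 2
          + (2 * γ ^ 2 / α ^ 2 * n ^ 2 + 1 / α * e ^ 2) := le_add_of_nonneg_right (by positivity)
      _ = _ := by ring
  refine le_of_sq_le_sq (hx.trans ?_) (by positivity)
  rw [add_sq, mul_pow, Real.sq_sqrt (by positivity), Real.sq_sqrt (by positivity)]
  have cross : 0 ≤ 2 * (√(2 * γ ^ 2 / α ^ 2 + 1 / α) * √(n ^ 2 + e ^ 2)) * (√2 * r / α) := by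
    positivity
  linarith

lemma mul_sub_sq_le_of_mul_le {α γ r s x z : ℝ} (hα : 0 < α) (hr : 0 ≤ r)
    (h : α * x ≤ γ * z + s) :
    r * x - z ^ 2 ≤ r * s / α + γ ^ 2 / (2 * α ^ 2) * r ^ 2 := by
  have hx : x ≤ (γ * z + s) / α := (le_div_iff₀' hα).mpr h
  have young : r * γ / α * z ≤ (r * γ / α) ^ 2 / 2 + z ^ 2 := by
    linarith [sq_nonneg (r * γ / α - z), sq_nonneg z]
  calc r * x - z ^ 2 ≤ r * ((γ * z + s) / α) - z ^ 2 := by gcongr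
    _ = r * s / α + (r * γ / α * z - z ^ 2) := by ring
    _ ≤ r * s / α + (r * γ / α) ^ 2 / 2 := by linarith
    _ = _ := by ring

end Scalar

lemma sum_Icc_one_sub_succ {G : Type*} [AddCommGroup G] (F : ℕ → G) (K : ℕ) :
    ∑ k ∈ Icc 1 K, (F k - F (k + 1)) = F 1 - F (K + 1) := by
  have h := sum_Ico_sub (n := K + 1) F (Nat.le_add_left 1 K)
  rw [Ico_add_one_right_eq_Icc] at h
  rw [← neg_sub (F (K + 1)), ← h, ← sum_neg_distrib]
  simp only [neg_sub]

section TimeNorm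

/-- The discrete `L²` norm in time of a grid function, with step `τ` and nodes `1, …, K`. -/
noncomputable def timeNorm (τ : ℝ) (K : ℕ) (x : ℕ → ℝ) : ℝ :=
  √(τ * ∑ k ∈ Icc 1 K, x k ^ 2)

variable {τ : ℝ} {K : ℕ}

lemma timeNorm_nonneg (x : ℕ → ℝ) : 0 ≤ timeNorm τ K x :=
  Real.sqrt_nonneg _

lemma timeNorm_sq (hτ : 0 ≤ τ) (x : ℕ → ℝ) :
    timeNorm τ K x ^ 2 = τ * ∑ k ∈ Icc 1 K, x k ^ 2 :=
  Real.sq_sqrt (mul_nonneg hτ (sum_nonneg fun _ _ => sq_nonneg _))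

lemma timeNorm_const_mul (c : ℝ) (x : ℕ → ℝ) :
    timeNorm τ K (fun k => c * x k) = |c| * timeNorm τ K x := by
  simp only [timeNorm, mul_pow, ← mul_sum, mul_left_comm τ]
  rw [Real.sqrt_mul (sq_nonneg c), Real.sqrt_sq_eq_abs]

lemma mul_sum_le_timeNorm_mul_timeNorm (hτ : 0 ≤ τ) {g x z : ℕ → ℝ}
    (h : ∀ k ∈ Icc 1 K, g k ≤ x k * z k) :
    τ * ∑ k ∈ Icc 1 K, g k ≤ timeNorm τ K x * timeNorm τ K z := by
  calc τ * ∑ k ∈ Icc 1 K, g k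
      ≤ τ * (√(∑ k ∈ Icc 1 K, x k ^ 2) * √(∑ k ∈ Icc 1 K, z k ^ 2)) := by
        gcongr
        exact (sum_le_sum h).trans (Real.sum_mul_le_sqrt_mul_sqrt _ x z)
    _ = (√τ * √τ) * (√(∑ k ∈ Icc 1 K, x k ^ 2) * √(∑ k ∈ Icc 1 K, z k ^ 2)) := by
        rw [Real.mul_self_sqrt hτ]
    _ = timeNorm τ K x * timeNorm τ K z := by
        rw [timeNorm, timeNorm, Real.sqrt_mul hτ, Real.sqrt_mul hτ]
        ring

end TimeNorm

section DualNorm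

variable {Y H : Type*} [AddCommGroup Y] [Module ℝ Y] [NormedAddCommGroup H] [NormedSpace ℝ H]
  {ι : Y →ₗ[ℝ] H}

lemma exists_forall_abs_le_mul_norm_of_injective [FiniteDimensional ℝ Y]
    (hι : Function.Injective ι) (r : Y →ₗ[ℝ] ℝ) : ∃ M : ℝ, ∀ v, |r v| ≤ M * ‖ι v‖ := by
  let e := LinearEquiv.ofInjective ι hι
  let r' := (r ∘ₗ e.symm.toLinearMap).toContinuousLinearMap
  refine ⟨‖r'‖, fun v => ?_⟩
  simpa [r', e] using r'.le_opNorm (e v)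

lemma abs_le_dualNorm_mul_norm (hι : Function.Injective ι) (S : Submodule ℝ Y) {r : Y →ₗ[ℝ] ℝ}
    (hr : ∃ M : ℝ, ∀ v, |r v| ≤ M * ‖ι v‖) {v : Y} (hv : v ∈ S) :
    |r v| ≤ dualNorm (fun w => ‖ι w‖) (S : Set Y) r * ‖ι v‖ := by
  obtain ⟨M, hM⟩ := hr
  have hpos : ∀ w : Y, w ≠ 0 → 0 < ‖ι w‖ := fun w hw =>
    norm_pos_iff.mpr ((map_ne_zero_iff ι hι).mpr hw)
  have hle : ∀ w ∈ S, r w ≤ dualNorm (fun w => ‖ι w‖) (S : Set Y) r * ‖ι w‖ := by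
    intro w hw
    rcases eq_or_ne w 0 with rfl | hw0
    · simp
    · refine (div_le_iff₀ (hpos w hw0)).mp (le_csSup ⟨M, ?_⟩ ⟨w, hw, hw0, rfl⟩)
      rintro _ ⟨x, -, hx0, rfl⟩
      exact (div_le_iff₀ (hpos x hx0)).mpr ((le_abs_self _).trans (hM x))
  exact abs_le'.mpr ⟨hle v hv, by simpa using hle (-v) (S.neg_mem hv)⟩

end DualNorm

lemma norm_sq_sub_norm_sq_le_two_mul_inner {H : Type*} [SeminormedAddCommGroup H]
    [InnerProductSpace ℝ H] (v w : H) : ‖v‖ ^ 2 - ‖w‖ ^ 2 ≤ 2 * ⟪v - w, v⟫ := by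
  rw [inner_sub_left, real_inner_self_eq_norm_sq, real_inner_comm]
  linarith [norm_sub_sq_real v w, sq_nonneg ‖v - w‖]

/-- The implicit Euler optimality system for state `y`, adjoint `p` and controls `u`, with
right-hand sides `F`, `G`, `Q`, `q` of the state equation, the adjoint equation, the optimality
condition and the initial optimality condition. These are plain functions, so that data, perturbed
data and residuals can all be taken as right-hand sides. -/
structure IsCoupledSolution {H Y D : Type*} [SeminormedAddCommGroup H] [InnerProductSpace ℝ H]
    [AddCommGroup Y] [Module ℝ Y] [SeminormedAddCommGroup D] [InnerProductSpace ℝ D]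
    (ι : Y →ₗ[ℝ] H) (U : Submodule ℝ Y) (a b : Y →ₗ[ℝ] Y →ₗ[ℝ] ℝ) (C : Y →ₗ[ℝ] D) (τ : ℝ) (K : ℕ)
    (F G Q : ℕ → Y → ℝ) (q : Y → ℝ) (y p u : ℕ → Y) : Prop where
  control_mem : ∀ k ≤ K, u k ∈ U
  initial : y 0 = u 0
  final : p (K + 1) = 0
  state : ∀ k ∈ Icc 1 K, ∀ φ,
    ⟪ι (y k - y (k - 1)), ι φ⟫ + τ * a (y k) φ = τ * b (u k) φ + τ * F k φ
  adjoint : ∀ k ∈ Icc 1 K, ∀ φ,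
    ⟪ι φ, ι (p k - p (k + 1))⟫ + τ * a φ (p k) = τ * (G k φ - ⟪C (y k), C φ⟫)
  optimality : ∀ k ∈ Icc 1 K, ∀ ψ ∈ U, ⟪ι (u k), ι ψ⟫ = b ψ (p k) + Q k ψ
  initial_optimality : ∀ ψ ∈ U, ⟪ι (u 0), ι ψ⟫ = ⟪ι ψ, ι (p 1)⟫ + q ψ

namespace IsCoupledSolution

section Algebra

variable {H Y D : Type*} [SeminormedAddCommGroup H] [InnerProductSpace ℝ H]
  [AddCommGroup Y] [Module ℝ Y] [SeminormedAddCommGroup D] [InnerProductSpace ℝ D]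
  {ι : Y →ₗ[ℝ] H} {U : Submodule ℝ Y} {a b : Y →ₗ[ℝ] Y →ₗ[ℝ] ℝ} {C : Y →ₗ[ℝ] D} {τ : ℝ} {K : ℕ}
  {F G Q F' G' Q' : ℕ → Y → ℝ} {q q' : Y → ℝ} {y p u y' p' u' : ℕ → Y}

lemma sub (h : IsCoupledSolution ι U a b C τ K F G Q q y p u)
    (h' : IsCoupledSolution ι U a b C τ K F' G' Q' q' y' p' u') :
    IsCoupledSolution ι U a b C τ K (F - F') (G - G') (Q - Q') (q - q')
      (y - y') (p - p') (u - u') where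
  control_mem k hk := U.sub_mem (h.control_mem k hk) (h'.control_mem k hk)
  initial := by simp only [Pi.sub_apply, h.initial, h'.initial]
  final := by simp only [Pi.sub_apply, h.final, h'.final, sub_zero]
  state k hk φ := by
    have e := h.state k hk φ
    have e' := h'.state k hk φ
    simp only [Pi.sub_apply, map_sub, LinearMap.sub_apply, inner_sub_left] at e e' ⊢
    linarith
  adjoint k hk φ := by
    have e := h.adjoint k hk φ
    have e' := h'.adjoint k hk φ
    simp only [Pi.sub_apply, map_sub, inner_sub_left, inner_sub_right] at e e' ⊢
    linarith
  optimality k hk ψ hψ := by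
    simp only [Pi.sub_apply, map_sub, inner_sub_left, h.optimality k hk ψ hψ,
      h'.optimality k hk ψ hψ]
    ring
  initial_optimality ψ hψ := by
    simp only [Pi.sub_apply, map_sub, inner_sub_left, inner_sub_right, h.initial_optimality ψ hψ,
      h'.initial_optimality ψ hψ]
    ring

lemma duality_identity (h : IsCoupledSolution ι U a b C τ K F G Q q y p u) :
    ‖ι (u 0)‖ ^ 2 + τ * ∑ k ∈ Icc 1 K, ‖ι (u k)‖ ^ 2 + τ * ∑ k ∈ Icc 1 K, ‖C (y k)‖ ^ 2
      = q (u 0) + τ * ∑ k ∈ Icc 1 K, Q k (u k) + τ * ∑ k ∈ Icc 1 K, G k (y k)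
        - τ * ∑ k ∈ Icc 1 K, F k (p k) := by
  have tested : ∀ k ∈ Icc 1 K, ⟪ι (y (k - 1)), ι (p k)⟫ - ⟪ι (y k), ι (p (k + 1))⟫
      = τ * (Q k (u k) + G k (y k) - F k (p k) - ‖ι (u k)‖ ^ 2 - ‖C (y k)‖ ^ 2) := by
    intro k hk
    have hstate := h.state k hk (p k)
    have hadjoint := h.adjoint k hk (y k)
    have hopt := h.optimality k hk (u k) (h.control_mem k (mem_Icc.mp hk).2)
    rw [map_sub, inner_sub_left] at hstate
    rw [map_sub, inner_sub_right, real_inner_self_eq_norm_sq] at hadjoint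
    rw [real_inner_self_eq_norm_sq] at hopt
    rw [hopt]
    linarith
  have telescoped : ∑ k ∈ Icc 1 K, (⟪ι (y (k - 1)), ι (p k)⟫ - ⟪ι (y k), ι (p (k + 1))⟫)
      = ⟪ι (u 0), ι (p 1)⟫ := by
    simpa [h.initial, h.final] using sum_Icc_one_sub_succ (fun k => ⟪ι (y (k - 1)), ι (p k)⟫) K
  have hinit := h.initial_optimality (u 0) (h.control_mem 0 K.zero_le)
  rw [real_inner_self_eq_norm_sq] at hinit
  rw [hinit, ← telescoped, sum_congr rfl tested, ← mul_sum]
  simp only [sum_sub_distrib, sum_add_distrib]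
  ring

end Algebra

section Estimates

variable {H Y D : Type*} [SeminormedAddCommGroup H] [InnerProductSpace ℝ H]
  [SeminormedAddCommGroup Y] [NormedSpace ℝ Y] [SeminormedAddCommGroup D] [InnerProductSpace ℝ D]
  {ι : Y →ₗ[ℝ] H} {U : Submodule ℝ Y} {a b : Y →ₗ[ℝ] Y →ₗ[ℝ] ℝ} {C : Y →ₗ[ℝ] D} {τ : ℝ} {K : ℕ}
  {F G Q F' G' Q' : ℕ → Y → ℝ} {q q' : Y → ℝ} {y p u y' p' u' : ℕ → Y}
  {α γb γc δ₀ : ℝ} {δy δp δu : ℕ → ℝ}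

lemma state_energy_le (h : IsCoupledSolution ι U a b C τ K F G Q q y p u) (hτ : 0 ≤ τ)
    (hcoer : ∀ v, α * ‖v‖ ^ 2 ≤ a v v)
    (hγb : ∀ w ∈ U, ∀ v, |b w v| ≤ γb * ‖ι w‖ * ‖v‖)
    (hF : ∀ k ∈ Icc 1 K, ∀ φ, |F k φ| ≤ δy k * ‖φ‖) :
    α * timeNorm τ K (fun k => ‖y k‖) ^ 2 ≤ ‖ι (u 0)‖ ^ 2 / 2
      + (|γb| * timeNorm τ K (fun k => ‖ι (u k)‖) + timeNorm τ K δy)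
        * timeNorm τ K (fun k => ‖y k‖) := by
  have step : ∀ k ∈ Icc 1 K, τ * (α * ‖y k‖ ^ 2)
      ≤ (‖ι (y (k - 1))‖ ^ 2 / 2 - ‖ι (y k)‖ ^ 2 / 2) + τ * (b (u k) (y k) + F k (y k)) := by
    intro k hk
    have tested := h.state k hk (y k)
    have euler := norm_sq_sub_norm_sq_le_two_mul_inner (ι (y k)) (ι (y (k - 1)))
    rw [← map_sub] at euler
    linarith [mul_le_mul_of_nonneg_left (hcoer (y k)) hτ]
  have telescoped := sum_Icc_one_sub_succ (fun k => ‖ι (y (k - 1))‖ ^ 2 / 2) K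
  simp only [add_tsub_cancel_right, tsub_self, h.initial] at telescoped
  have summed := sum_le_sum step
  rw [sum_add_distrib, telescoped] at summed
  simp only [← mul_sum, sum_add_distrib] at summed
  have hb : τ * ∑ k ∈ Icc 1 K, b (u k) (y k)
      ≤ timeNorm τ K (fun k => γb * ‖ι (u k)‖) * timeNorm τ K (fun k => ‖y k‖) :=
    mul_sum_le_timeNorm_mul_timeNorm hτ fun k hk =>
      (le_abs_self _).trans (hγb _ (h.control_mem k (mem_Icc.mp hk).2) _)
  have hFy : τ * ∑ k ∈ Icc 1 K, F k (y k) ≤ timeNorm τ K δy * timeNorm τ K (fun k => ‖y k‖) :=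
    mul_sum_le_timeNorm_mul_timeNorm hτ fun k hk => (le_abs_self _).trans (hF k hk _)
  rw [timeNorm_const_mul] at hb
  rw [timeNorm_sq hτ]
  linarith [sq_nonneg ‖ι (y K)‖]

lemma adjoint_energy_le (h : IsCoupledSolution ι U a b C τ K F G Q q y p u) (hτ : 0 ≤ τ)
    (hcoer : ∀ v, α * ‖v‖ ^ 2 ≤ a v v) (hγc : ∀ v, ‖C v‖ ≤ γc * ‖v‖)
    (hG : ∀ k ∈ Icc 1 K, ∀ φ, |G k φ| ≤ δp k * ‖φ‖) :
    α * timeNorm τ K (fun k => ‖p k‖) ^ 2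
      ≤ (|γc| * timeNorm τ K (fun k => ‖C (y k)‖) + timeNorm τ K δp)
        * timeNorm τ K (fun k => ‖p k‖) := by
  have step : ∀ k ∈ Icc 1 K,
      (‖ι (p k)‖ ^ 2 / 2 - ‖ι (p (k + 1))‖ ^ 2 / 2) + τ * (α * ‖p k‖ ^ 2)
        ≤ τ * (G k (p k) + -⟪C (y k), C (p k)⟫) := by
    intro k hk
    have tested := h.adjoint k hk (p k)
    have euler := norm_sq_sub_norm_sq_le_two_mul_inner (ι (p k)) (ι (p (k + 1)))
    rw [← map_sub, real_inner_comm] at euler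
    linarith [mul_le_mul_of_nonneg_left (hcoer (p k)) hτ]
  have summed := sum_le_sum step
  rw [sum_add_distrib, sum_Icc_one_sub_succ (fun k => ‖ι (p k)‖ ^ 2 / 2), h.final, map_zero,
    norm_zero] at summed
  simp only [← mul_sum, sum_add_distrib] at summed
  have hC : τ * ∑ k ∈ Icc 1 K, -⟪C (y k), C (p k)⟫
      ≤ timeNorm τ K (fun k => ‖C (y k)‖) * timeNorm τ K (fun k => γc * ‖p k‖) :=
    mul_sum_le_timeNorm_mul_timeNorm hτ fun k _ =>
      (neg_le_abs _).trans ((abs_real_inner_le_norm _ _).trans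
        (mul_le_mul_of_nonneg_left (hγc _) (norm_nonneg _)))
  have hGp : τ * ∑ k ∈ Icc 1 K, G k (p k) ≤ timeNorm τ K δp * timeNorm τ K (fun k => ‖p k‖) :=
    mul_sum_le_timeNorm_mul_timeNorm hτ fun k hk => (le_abs_self _).trans (hG k hk _)
  rw [timeNorm_const_mul] at hC
  rw [timeNorm_sq hτ]
  linarith [sq_nonneg ‖ι (p 1)‖]

lemma duality_le (h : IsCoupledSolution ι U a b C τ K F G Q q y p u) (hτ : 0 ≤ τ)
    (hF : ∀ k ∈ Icc 1 K, ∀ φ, |F k φ| ≤ δy k * ‖φ‖)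
    (hG : ∀ k ∈ Icc 1 K, ∀ φ, |G k φ| ≤ δp k * ‖φ‖)
    (hQ : ∀ k ∈ Icc 1 K, ∀ ψ ∈ U, |Q k ψ| ≤ δu k * ‖ι ψ‖)
    (hq : ∀ ψ ∈ U, |q ψ| ≤ δ₀ * ‖ι ψ‖) :
    ‖ι (u 0)‖ ^ 2 + timeNorm τ K (fun k => ‖ι (u k)‖) ^ 2 + timeNorm τ K (fun k => ‖C (y k)‖) ^ 2
      ≤ δ₀ * ‖ι (u 0)‖ + timeNorm τ K δu * timeNorm τ K (fun k => ‖ι (u k)‖)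
        + timeNorm τ K δp * timeNorm τ K (fun k => ‖y k‖)
        + timeNorm τ K δy * timeNorm τ K (fun k => ‖p k‖) := by
  have hqu := (le_abs_self _).trans (hq (u 0) (h.control_mem 0 K.zero_le))
  have hQu : τ * ∑ k ∈ Icc 1 K, Q k (u k)
      ≤ timeNorm τ K δu * timeNorm τ K (fun k => ‖ι (u k)‖) :=
    mul_sum_le_timeNorm_mul_timeNorm hτ fun k hk =>
      (le_abs_self _).trans (hQ k hk _ (h.control_mem k (mem_Icc.mp hk).2))
  have hGy : τ * ∑ k ∈ Icc 1 K, G k (y k) ≤ timeNorm τ K δp * timeNorm τ K (fun k => ‖y k‖) :=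
    mul_sum_le_timeNorm_mul_timeNorm hτ fun k hk => (le_abs_self _).trans (hG k hk _)
  have hFp : τ * ∑ k ∈ Icc 1 K, -F k (p k) ≤ timeNorm τ K δy * timeNorm τ K (fun k => ‖p k‖) :=
    mul_sum_le_timeNorm_mul_timeNorm hτ fun k hk => (neg_le_abs _).trans (hF k hk _)
  rw [sum_neg_distrib] at hFp
  rw [timeNorm_sq hτ (fun k => ‖ι (u k)‖), timeNorm_sq hτ (fun k => ‖C (y k)‖),
    h.duality_identity]
  linarith

theorem sq_control_norm_le (h : IsCoupledSolution ι U a b C τ K F G Q q y p u) (hτ : 0 ≤ τ)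
    (hα : 0 < α) (hcoer : ∀ v, α * ‖v‖ ^ 2 ≤ a v v) (hγc : ∀ v, ‖C v‖ ≤ γc * ‖v‖)
    (hγb : ∀ w ∈ U, ∀ v, |b w v| ≤ γb * ‖ι w‖ * ‖v‖)
    (hF : ∀ k ∈ Icc 1 K, ∀ φ, |F k φ| ≤ δy k * ‖φ‖)
    (hG : ∀ k ∈ Icc 1 K, ∀ φ, |G k φ| ≤ δp k * ‖φ‖)
    (hQ : ∀ k ∈ Icc 1 K, ∀ ψ ∈ U, |Q k ψ| ≤ δu k * ‖ι ψ‖)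
    (hq : ∀ ψ ∈ U, |q ψ| ≤ δ₀ * ‖ι ψ‖) :
    ‖ι (u 0)‖ ^ 2 + timeNorm τ K (fun k => ‖ι (u k)‖) ^ 2
      ≤ (√(δ₀ ^ 2 + timeNorm τ K δu ^ 2)
          + √(2 * γb ^ 2 / α ^ 2 + 1 / α) * timeNorm τ K δp)
          * √(‖ι (u 0)‖ ^ 2 + timeNorm τ K (fun k => ‖ι (u k)‖) ^ 2)
        + (2 * √2 / α * timeNorm τ K δy * timeNorm τ K δp
          + γc ^ 2 / (2 * α ^ 2) * timeNorm τ K δy ^ 2) := by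
  have hduality := h.duality_le hτ hF hG hQ hq
  have hstate := h.state_energy_le hτ hcoer hγb hF
  have hadjoint := h.adjoint_energy_le hτ hcoer hγc hG
  set X := timeNorm τ K (fun k => ‖y k‖)
  set P := timeNorm τ K (fun k => ‖p k‖)
  set Z := timeNorm τ K (fun k => ‖C (y k)‖)
  set E := timeNorm τ K (fun k => ‖ι (u k)‖)
  set Ry := timeNorm τ K δy
  set Rp := timeNorm τ K δp
  have hRy : 0 ≤ Ry := timeNorm_nonneg _
  have hRp : 0 ≤ Rp := timeNorm_nonneg _
  have hX := le_sqrt_mul_add_of_mul_sq_le hα hRy hstate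
  have hP_nonneg : 0 ≤ P := timeNorm_nonneg _
  have hZ : 0 ≤ Z := timeNorm_nonneg _
  have hP : α * P ≤ |γc| * Z + Rp := by
    rcases hP_nonneg.eq_or_lt with hP_zero | hP_pos
    · rw [← hP_zero, mul_zero]
      positivity
    · exact le_of_mul_le_mul_right (by linarith) hP_pos
  have hYoung := mul_sub_sq_le_of_mul_le hα hRy hP
  have hControl := mul_add_mul_le_sqrt_mul_sqrt δ₀ (timeNorm τ K δu) ‖ι (u 0)‖ E
  rw [sq_abs] at hX hYoung
  have hmixed : Ry * Rp / α ≤ √2 * (Ry * Rp / α) :=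
    le_mul_of_one_le_left (by positivity) (Real.one_le_sqrt.mpr one_le_two)
  linear_combination hduality + Rp * hX + hYoung + hControl + hmixed

theorem control_error_le (h : IsCoupledSolution ι U a b C τ K F G Q q y p u)
    (h' : IsCoupledSolution ι U a b C τ K F' G' Q' q' y' p' u') (hτ : 0 ≤ τ)
    (hα : 0 < α) (hcoer : ∀ v, α * ‖v‖ ^ 2 ≤ a v v) (hγc : ∀ v, ‖C v‖ ≤ γc * ‖v‖)
    (hγb : ∀ w ∈ U, ∀ v, |b w v| ≤ γb * ‖ι w‖ * ‖v‖)
    (hF : ∀ k ∈ Icc 1 K, ∀ φ, |F k φ - F' k φ| ≤ δy k * ‖φ‖)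
    (hG : ∀ k ∈ Icc 1 K, ∀ φ, |G k φ - G' k φ| ≤ δp k * ‖φ‖)
    (hQ : ∀ k ∈ Icc 1 K, ∀ ψ ∈ U, |Q k ψ - Q' k ψ| ≤ δu k * ‖ι ψ‖)
    (hq : ∀ ψ ∈ U, |q ψ - q' ψ| ≤ δ₀ * ‖ι ψ‖) {c1 c2 : ℝ}
    (hc1 : c1 = (1 / 2) * (√(δ₀ ^ 2 + timeNorm τ K δu ^ 2)
      + √(2 * γb ^ 2 / α ^ 2 + 1 / α) * timeNorm τ K δp))
    (hc2 : c2 = (2 * √2 / α) * timeNorm τ K δy * timeNorm τ K δp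
      + γc ^ 2 / (2 * α ^ 2) * timeNorm τ K δy ^ 2) :
    √(‖ι (u 0 - u' 0)‖ ^ 2 + τ * ∑ k ∈ Icc 1 K, ‖ι (u k - u' k)‖ ^ 2)
      ≤ c1 + √(c1 ^ 2 + c2) := by
  have hquadratic := (h.sub h').sq_control_norm_le hτ hα hcoer hγc hγb hF hG hQ hq
  simp only [Pi.sub_apply] at hquadratic
  rw [← timeNorm_sq hτ (fun k => ‖ι (u k - u' k)‖)]
  apply le_add_sqrt_of_sq_le
  rw [Real.sq_sqrt (by positivity), hc1, hc2]
  linarith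

end Estimates

end IsCoupledSolution

theorem combined_a_posteriori_error_bound_general
    {H Y D : Type*} [SeminormedAddCommGroup H] [InnerProductSpace ℝ H]
    [SeminormedAddCommGroup Y] [NormedSpace ℝ Y]
    [SeminormedAddCommGroup D] [InnerProductSpace ℝ D]
    (ι : Y →ₗ[ℝ] H) (U : Submodule ℝ Y)
    (a : Y →ₗ[ℝ] (Y →ₗ[ℝ] ℝ)) (τ : ℝ) (hτ : 0 < τ) (K : ℕ)
    (αLB : ℝ) (hαLB : 0 < αLB) (hcoer : ∀ v : Y, αLB * ‖v‖ ^ 2 ≤ a v v)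
    (C : Y →ₗ[ℝ] D) (γc : ℝ) (hγc : ∀ v : Y, ‖C v‖ ≤ γc * ‖v‖)
    (b : Y →ₗ[ℝ] (Y →ₗ[ℝ] ℝ)) (γb : ℝ)
    (hγb : ∀ w ∈ U, ∀ v : Y, |b w v| ≤ γb * ‖ι w‖ * ‖v‖)
    (f : Y → ℝ) (zd : ℕ → D) (ud : ℕ → Y)
    (y p yN pN : ℕ → Y) (u uN : ℕ → Y)
    (hu : ∀ k ≤ K, u k ∈ U) (huN : ∀ k ≤ K, uN k ∈ U)
    (hy0 : y 0 = u 0)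
    (hstate : ∀ k, 1 ≤ k → k ≤ K → ∀ φ : Y,
      ⟪ι (y k - y (k - 1)), ι φ⟫ + τ * a (y k) φ = τ * b (u k) φ + τ * f φ)
    (hpfin : p (K + 1) = 0)
    (hadj : ∀ k, 1 ≤ k → k ≤ K → ∀ φ : Y,
      ⟪ι φ, ι (p k - p (k + 1))⟫ + τ * a φ (p k) = τ * ⟪zd k - C (y k), C φ⟫)
    (hopt : ∀ k, 1 ≤ k → k ≤ K → ∀ ψ ∈ U, ⟪ι (u k - ud k), ι ψ⟫ - b ψ (p k) = 0)
    (hopt0 : ∀ ψ ∈ U, ⟪ι (u 0 - ud 0), ι ψ⟫ - ⟪ι ψ, ι (p 1)⟫ = 0)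
    (hyN0 : yN 0 = uN 0) (hpNfin : pN (K + 1) = 0)
    (ry rp ru : ℕ → Y → ℝ) (ru0 : Y → ℝ)
    (hry : ∀ k, 1 ≤ k → k ≤ K → ∀ φ : Y,
      ry k φ = f φ + b (uN k) φ - a (yN k) φ - (1 / τ) * ⟪ι (yN k - yN (k - 1)), ι φ⟫)
    (hrp : ∀ k, 1 ≤ k → k ≤ K → ∀ φ : Y,
      rp k φ = ⟪zd k - C (yN k), C φ⟫ - a φ (pN k) - (1 / τ) * ⟪ι φ, ι (pN k - pN (k + 1))⟫)
    (hru : ∀ k, 1 ≤ k → k ≤ K → ∀ ψ ∈ U, ru k ψ = b ψ (pN k) - ⟪ι (uN k - ud k), ι ψ⟫)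
    (hru0 : ∀ ψ ∈ U, ru0 ψ = ⟪ι ψ, ι (pN 1)⟫ - ⟪ι (uN 0 - ud 0), ι ψ⟫)
    (δy δp δu : ℕ → ℝ) (δ₀ : ℝ)
    (hδy : ∀ k, 1 ≤ k → k ≤ K → ∀ φ : Y, |ry k φ| ≤ δy k * ‖φ‖)
    (hδp : ∀ k, 1 ≤ k → k ≤ K → ∀ φ : Y, |rp k φ| ≤ δp k * ‖φ‖)
    (hδu : ∀ k, 1 ≤ k → k ≤ K → ∀ ψ ∈ U, |ru k ψ| ≤ δu k * ‖ι ψ‖)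
    (hδ₀ : ∀ ψ ∈ U, |ru0 ψ| ≤ δ₀ * ‖ι ψ‖)
    (c1 c2 : ℝ)
    (hc1 : c1 = (1 / 2) * (√(δ₀ ^ 2 + timeNorm τ K δu ^ 2)
      + √(2 * γb ^ 2 / αLB ^ 2 + 1 / αLB) * timeNorm τ K δp))
    (hc2 : c2 = (2 * √2 / αLB) * timeNorm τ K δy * timeNorm τ K δp
      + γc ^ 2 / (2 * αLB ^ 2) * timeNorm τ K δy ^ 2) :
    √(‖ι (u 0 - uN 0)‖ ^ 2 + τ * ∑ k ∈ Icc 1 K, ‖ι (u k - uN k)‖ ^ 2)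
      ≤ c1 + √(c1 ^ 2 + c2) := by
  simp only [map_sub, inner_sub_left] at hopt hopt0 hru hru0
  have exact_solution : IsCoupledSolution ι U a b C τ K (fun _ => f) (fun k φ => ⟪zd k, C φ⟫)
      (fun k ψ => ⟪ι (ud k), ι ψ⟫) (fun ψ => ⟪ι (ud 0), ι ψ⟫) y p u :=
    { control_mem := hu, initial := hy0, final := hpfin
      state := fun k hk => hstate k (mem_Icc.mp hk).1 (mem_Icc.mp hk).2
      adjoint := fun k hk φ => by
        rw [hadj k (mem_Icc.mp hk).1 (mem_Icc.mp hk).2, inner_sub_left]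
      optimality := fun k hk ψ hψ => by
        linarith [hopt k (mem_Icc.mp hk).1 (mem_Icc.mp hk).2 ψ hψ]
      initial_optimality := fun ψ hψ => by linarith [hopt0 ψ hψ] }
  have candidate : IsCoupledSolution ι U a b C τ K (fun k φ => f φ - ry k φ)
      (fun k φ => ⟪zd k, C φ⟫ - rp k φ) (fun k ψ => ⟪ι (ud k), ι ψ⟫ - ru k ψ)
      (fun ψ => ⟪ι (ud 0), ι ψ⟫ - ru0 ψ) yN pN uN :=
    { control_mem := huN, initial := hyN0, final := hpNfin
      state := fun k hk φ => by
        rw [hry k (mem_Icc.mp hk).1 (mem_Icc.mp hk).2]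
        field_simp
        ring
      adjoint := fun k hk φ => by
        rw [hrp k (mem_Icc.mp hk).1 (mem_Icc.mp hk).2, inner_sub_left]
        field_simp
        ring
      optimality := fun k hk ψ hψ => by
        linarith [hru k (mem_Icc.mp hk).1 (mem_Icc.mp hk).2 ψ hψ]
      initial_optimality := fun ψ hψ => by linarith [hru0 ψ hψ] }
  exact exact_solution.control_error_le candidate hτ.le hαLB hcoer hγc hγb
    (fun k hk φ => by simpa using hδy k (mem_Icc.mp hk).1 (mem_Icc.mp hk).2 φ)
    (fun k hk φ => by simpa using hδp k (mem_Icc.mp hk).1 (mem_Icc.mp hk).2 φ)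
    (fun k hk ψ hψ => by simpa using hδu k (mem_Icc.mp hk).1 (mem_Icc.mp hk).2 ψ hψ)
    (fun ψ hψ => by simpa using hδ₀ ψ hψ) hc1 hc2

/-- Combined a posteriori error bound (Proposition 3). -/
theorem combined_a_posteriori_error_bound
    {H Y D : Type*} [NormedAddCommGroup H] [InnerProductSpace ℝ H]
    [NormedAddCommGroup Y] [InnerProductSpace ℝ Y] [FiniteDimensional ℝ Y]
    [NormedAddCommGroup D] [InnerProductSpace ℝ D]
    (ι : Y →ₗ[ℝ] H) (hι : Function.Injective ι)
    (U : Submodule ℝ Y)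
    (a : Y →ₗ[ℝ] (Y →ₗ[ℝ] ℝ))
    (τ : ℝ) (hτ : 0 < τ) (K : ℕ) (hK : 1 ≤ K)
    (αLB : ℝ) (hαLB : 0 < αLB) (hcoer : ∀ v : Y, αLB * ‖v‖ ^ 2 ≤ a v v)
    (C : Y →ₗ[ℝ] D) (γc : ℝ) (hγc : ∀ v : Y, ‖C v‖ ≤ γc * ‖v‖)
    (b : Y →ₗ[ℝ] (Y →ₗ[ℝ] ℝ)) (γb : ℝ)
    (hγb : ∀ w ∈ U, ∀ v : Y, |b w v| ≤ γb * ‖ι w‖ * ‖v‖)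
    (f : Y →ₗ[ℝ] ℝ) (zd : ℕ → D) (ud : ℕ → Y)
    (hud : ∀ k ≤ K, ud k ∈ U)
    (y p yN pN : ℕ → Y) (u uN : ℕ → Y)
    (hu : ∀ k ≤ K, u k ∈ U) (huN : ∀ k ≤ K, uN k ∈ U)
    (hy0 : y 0 = u 0)
    (hstate : ∀ k, 1 ≤ k → k ≤ K → ∀ φ : Y,
      ⟪ι (y k - y (k - 1)), ι φ⟫ + τ * a (y k) φ = τ * b (u k) φ + τ * f φ)
    (hpfin : p (K + 1) = 0)
    (hadj : ∀ k, 1 ≤ k → k ≤ K → ∀ φ : Y,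
      ⟪ι φ, ι (p k - p (k + 1))⟫ + τ * a φ (p k) = τ * ⟪zd k - C (y k), C φ⟫)
    (hopt : ∀ k, 1 ≤ k → k ≤ K → ∀ ψ ∈ U,
      ⟪ι (u k - ud k), ι ψ⟫ - b ψ (p k) = 0)
    (hopt0 : ∀ ψ ∈ U, ⟪ι (u 0 - ud 0), ι ψ⟫ - ⟪ι ψ, ι (p 1)⟫ = 0)
    (hyN0 : yN 0 = uN 0) (hpNfin : pN (K + 1) = 0)
    (ry rp ru : ℕ → (Y →ₗ[ℝ] ℝ)) (ru0 : Y →ₗ[ℝ] ℝ)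
    (hry : ∀ k, 1 ≤ k → k ≤ K → ∀ φ : Y,
      ry k φ = f φ + b (uN k) φ - a (yN k) φ
        - (1 / τ) * ⟪ι (yN k - yN (k - 1)), ι φ⟫)
    (hrp : ∀ k, 1 ≤ k → k ≤ K → ∀ φ : Y,
      rp k φ = ⟪zd k - C (yN k), C φ⟫ - a φ (pN k)
        - (1 / τ) * ⟪ι φ, ι (pN k - pN (k + 1))⟫)
    (hru : ∀ k, 1 ≤ k → k ≤ K → ∀ ψ ∈ U,
      ru k ψ = b ψ (pN k) - ⟪ι (uN k - ud k), ι ψ⟫)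
    (hru0 : ∀ ψ ∈ U, ru0 ψ = ⟪ι ψ, ι (pN 1)⟫ - ⟪ι (uN 0 - ud 0), ι ψ⟫)
    (Ry Rp Ru c1 c2 : ℝ)
    (hRy : Ry = Real.sqrt (τ * ∑ k ∈ Icc 1 K, (dualNorm (fun v : Y => ‖v‖) Set.univ ⇑(ry k)) ^ 2))
    (hRp : Rp = Real.sqrt (τ * ∑ k ∈ Icc 1 K, (dualNorm (fun v : Y => ‖v‖) Set.univ ⇑(rp k)) ^ 2))
    (hRu : Ru = Real.sqrt (τ * ∑ k ∈ Icc 1 K, (dualNorm (fun v : Y => ‖ι v‖) (U : Set Y) ⇑(ru k)) ^ 2))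
    (hc1 : c1 = (1 / 2) * (Real.sqrt ((dualNorm (fun v : Y => ‖ι v‖) (U : Set Y) ⇑ru0) ^ 2 + Ru ^ 2)
      + Real.sqrt (2 * γb ^ 2 / αLB ^ 2 + 1 / αLB) * Rp))
    (hc2 : c2 = (2 * Real.sqrt 2 / αLB) * Ry * Rp + γc ^ 2 / (2 * αLB ^ 2) * Ry ^ 2) :
    Real.sqrt (‖ι (u 0 - uN 0)‖ ^ 2 + τ * ∑ k ∈ Icc 1 K, ‖ι (u k - uN k)‖ ^ 2)
      ≤ c1 + Real.sqrt (c1 ^ 2 + c2) := by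
  have le_dualNorm (r : Y →ₗ[ℝ] ℝ) (φ : Y) :
      |r φ| ≤ dualNorm (fun v : Y => ‖v‖) Set.univ ⇑r * ‖φ‖ :=
    abs_le_dualNorm_mul_norm (ι := LinearMap.id) Function.injective_id ⊤
      (exists_forall_abs_le_mul_norm_of_injective Function.injective_id r) Submodule.mem_top
  have le_dualNorm_control (r : Y →ₗ[ℝ] ℝ) (ψ : Y) (hψ : ψ ∈ U) :
      |r ψ| ≤ dualNorm (fun v : Y => ‖ι v‖) (U : Set Y) ⇑r * ‖ι ψ‖ :=
    abs_le_dualNorm_mul_norm hι U (exists_forall_abs_le_mul_norm_of_injective hι r) hψ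
  subst hRy hRp hRu
  exact combined_a_posteriori_error_bound_general ι U a τ hτ K αLB hαLB hcoer C γc hγc b γb hγb
    f zd ud y p yN pN u uN hu huN hy0 hstate hpfin hadj hopt hopt0 hyN0 hpNfin
    (fun k => ry k) (fun k => rp k) (fun k => ru k) ru0 hry hrp hru hru0 _ _ _ _
    (fun k _ _ => le_dualNorm (ry k)) (fun k _ _ => le_dualNorm (rp k))
    (fun k _ _ => le_dualNorm_control (ru k)) (le_dualNorm_control ru0) c1 c2 hc1 hc2
end

section
/- Combined error-residual duality identity (used in the proof of Proposition 3). Suppose e_y^0,…,e_y^K ∈ Y, e_p^1,…,e_p^{K+1} ∈ Y, e_u^0 ∈ U and e_u^1,…,e_u^K ∈ U, together with linear functionals r̃_y^1,…,r̃_y^K and r̃_p^1,…,r̃_p^K on Y, r̃_u^1,…,r̃_u^K on U and r_u^0 on U, satisfy: (i) m(e_y^k − e_y^{k−1}, φ) + τ a(e_y^k, φ) = τ r̃_y^k(φ) + τ b(e_u^k, φ) for all φ ∈ Y and k = 1,…,K; (ii) m(φ, e_p^k − e_p^{k+1}) + τ a(φ, e_p^k) = τ r̃_p^k(φ) − τ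 (C e_y^k, C φ)_D for all φ ∈ Y and k = 1,…,K; (iii) (e_u^k, ψ)_U − b(ψ, e_p^k) = r̃_u^k(ψ) for all ψ ∈ U and k = 1,…,K; (iv) (e_u^0, ψ)_U − m(ψ, e_p^1) = r_u^0(ψ) for all ψ ∈ U; with e_p^{K+1} = 0 and e_y^0 = e_u^0. Then ‖e_u^0‖_U² + τ Σ_{k=1}^K ‖e_u^k‖_U² + τ Σ_{k=1}^K ‖C e_y^k‖_D² = −τ Σ_{k=1}^K r̃_y^k(e_p^k) + τ Σ_{k=1}^K r̃_p^k(e_y^k) + τ Σ_{k=1}^K r̃_u^k(e_u^k) + r_u^0(e_u^0). -/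
set_option autoImplicit false

open Finset RealInnerProductSpace

/-!
Testing the state equation with the adjoint error and the adjoint equation with the state error
makes the two occurrences of `a` cancel, and summation by parts in time leaves only the pairing
`m(e_y⁰, e_p¹)`. The optimality conditions, tested with the control errors, express this pairing
and the coupling terms `b(e_u^k, e_p^k)` through `‖e_u^k‖²` and the residuals.
-/

section BilinearForms

variable {R : Type*} [CommRing R]

theorem sum_Icc_bilin_by_parts {M N P : Type*}
    [AddCommGroup M] [Module R M] [AddCommGroup N] [Module R N] [AddCommGroup P] [Module R P]
    (m : M →ₗ[R] N →ₗ[R] P) (y : ℕ → M) (p : ℕ → N) (K : ℕ) :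
    ∑ k ∈ Icc 1 K, m (y k) (p k - p (k + 1)) - ∑ k ∈ Icc 1 K, m (y k - y (k - 1)) (p k)
      = m (y 0) (p 1) - m (y K) (p (K + 1)) := by
  induction K with
  | zero => simp
  | succ K ih =>
    simp only [sum_Icc_succ_top (Nat.le_add_left 1 K), Nat.add_sub_cancel, map_sub,
      LinearMap.sub_apply] at ih ⊢
    rw [add_sub_add_comm, ih]
    abel

variable {Y : Type*} [AddCommGroup Y] [Module R Y]

theorem implicit_euler_duality (m : LinearMap.BilinForm R Y) (a : Y → Y → R) (K : ℕ)
    (y p : ℕ → Y) (f g : ℕ → Y → R)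
    (hstate : ∀ k, 1 ≤ k → k ≤ K → ∀ φ, m (y k - y (k - 1)) φ + a (y k) φ = f k φ)
    (hadj : ∀ k, 1 ≤ k → k ≤ K → ∀ φ, m φ (p k - p (k + 1)) + a φ (p k) = g k φ) :
    ∑ k ∈ Icc 1 K, (g k (y k) - f k (p k)) = m (y 0) (p 1) - m (y K) (p (K + 1)) := by
  rw [← sum_Icc_bilin_by_parts, ← sum_sub_distrib]
  refine sum_congr rfl fun k hk ↦ ?_
  obtain ⟨hk₁, hkK⟩ := mem_Icc.mp hk
  rw [← hstate k hk₁ hkK, ← hadj k hk₁ hkK, add_sub_add_right_eq_sub]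

theorem combined_error_residual_identity_general
    (m : LinearMap.BilinForm R Y) (U : Set Y) (a b c : Y → Y → R) (τ : R) (K : ℕ)
    (ey ep eu : ℕ → Y) (heu : ∀ k ≤ K, eu k ∈ U)
    (ry rp ru : ℕ → Y → R) (ru0 : Y → R)
    (hstate : ∀ k, 1 ≤ k → k ≤ K → ∀ φ,
      m (ey k - ey (k - 1)) φ + τ * a (ey k) φ = τ * ry k φ + τ * b (eu k) φ)
    (hadj : ∀ k, 1 ≤ k → k ≤ K → ∀ φ,
      m φ (ep k - ep (k + 1)) + τ * a φ (ep k) = τ * rp k φ - τ * c (ey k) φ)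
    (hopt : ∀ k, 1 ≤ k → k ≤ K → ∀ ψ ∈ U, m (eu k) ψ - b ψ (ep k) = ru k ψ)
    (hopt0 : ∀ ψ ∈ U, m (eu 0) ψ - m ψ (ep 1) = ru0 ψ)
    (hfin : ep (K + 1) = 0) (hinit : ey 0 = eu 0) :
    m (eu 0) (eu 0) + τ * ∑ k ∈ Icc 1 K, m (eu k) (eu k) + τ * ∑ k ∈ Icc 1 K, c (ey k) (ey k)
      = -(τ * ∑ k ∈ Icc 1 K, ry k (ep k)) + τ * ∑ k ∈ Icc 1 K, rp k (ey k)
        + τ * ∑ k ∈ Icc 1 K, ru k (eu k) + ru0 (eu 0) := by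
  have duality := implicit_euler_duality m (fun y φ ↦ τ * a y φ) K ey ep _ _ hstate hadj
  have coupling : ∑ k ∈ Icc 1 K, b (eu k) (ep k)
      = ∑ k ∈ Icc 1 K, m (eu k) (eu k) - ∑ k ∈ Icc 1 K, ru k (eu k) := by
    rw [← sum_sub_distrib]
    refine sum_congr rfl fun k hk ↦ ?_
    obtain ⟨hk₁, hkK⟩ := mem_Icc.mp hk
    rw [← hopt k hk₁ hkK _ (heu k hkK), sub_sub_cancel]
  have initial : m (eu 0) (eu 0) - m (eu 0) (ep 1) = ru0 (eu 0) :=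
    hopt0 (eu 0) (heu 0 K.zero_le)
  simp only [sum_sub_distrib, sum_add_distrib, ← mul_sum, hfin, hinit, map_zero, sub_zero]
    at duality
  linear_combination initial - duality - τ * coupling

end BilinearForms

/-- Combined error-residual duality identity (used in the proof of Proposition 3). -/
theorem combined_error_residual_identity
    {H Y D : Type*} [NormedAddCommGroup H] [InnerProductSpace ℝ H]
    [NormedAddCommGroup Y] [InnerProductSpace ℝ Y] [FiniteDimensional ℝ Y]
    [NormedAddCommGroup D] [InnerProductSpace ℝ D]
    (ι : Y →ₗ[ℝ] H) (hι : Function.Injective ι)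
    (U : Submodule ℝ Y)
    (a : Y →ₗ[ℝ] (Y →ₗ[ℝ] ℝ))
    (τ : ℝ) (hτ : 0 < τ) (K : ℕ) (hK : 1 ≤ K)
    (b : Y →ₗ[ℝ] (Y →ₗ[ℝ] ℝ))
    (C : Y →ₗ[ℝ] D)
    (ey ep eu : ℕ → Y) (heu : ∀ k ≤ K, eu k ∈ U)
    (ry rp ru : ℕ → (Y →ₗ[ℝ] ℝ)) (ru0 : Y →ₗ[ℝ] ℝ)
    (hstate : ∀ k, 1 ≤ k → k ≤ K → ∀ φ : Y,
      ⟪ι (ey k - ey (k - 1)), ι φ⟫ + τ * a (ey k) φ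
        = τ * ry k φ + τ * b (eu k) φ)
    (hadj : ∀ k, 1 ≤ k → k ≤ K → ∀ φ : Y,
      ⟪ι φ, ι (ep k - ep (k + 1))⟫ + τ * a φ (ep k)
        = τ * rp k φ - τ * ⟪C (ey k), C φ⟫)
    (hopt : ∀ k, 1 ≤ k → k ≤ K → ∀ ψ ∈ U,
      ⟪ι (eu k), ι ψ⟫ - b ψ (ep k) = ru k ψ)
    (hopt0 : ∀ ψ ∈ U, ⟪ι (eu 0), ι ψ⟫ - ⟪ι ψ, ι (ep 1)⟫ = ru0 ψ)
    (hfin : ep (K + 1) = 0) (hinit : ey 0 = eu 0) :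
    ‖ι (eu 0)‖ ^ 2 + τ * ∑ k ∈ Icc 1 K, ‖ι (eu k)‖ ^ 2
        + τ * ∑ k ∈ Icc 1 K, ‖C (ey k)‖ ^ 2
      = -(τ * ∑ k ∈ Icc 1 K, ry k (ep k))
        + τ * ∑ k ∈ Icc 1 K, rp k (ey k)
        + τ * ∑ k ∈ Icc 1 K, ru k (eu k) + ru0 (eu 0) := by
  simpa only [LinearMap.compl₁₂_apply, innerₗ_apply_apply, real_inner_self_eq_norm_sq] using
    combined_error_residual_identity_general ((innerₗ H).compl₁₂ ι ι) U (a · ·) (b · ·)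
      (fun y φ ↦ ⟪C y, C φ⟫) τ K ey ep eu heu (ry · ·) (rp · ·) (ru · ·) ru0
      hstate hadj hopt hopt0 hfin hinit
end

section
/- Spatio-temporal energy estimate for the adjoint error (inequality (eq11)). Suppose e_p^1,…,e_p^{K+1} ∈ Y with e_p^{K+1} = 0 and e_y^1,…,e_y^K ∈ Y, together with linear functionals r_p^1,…,r_p^K on Y, satisfy m(φ, e_p^k − e_p^{k+1}) + τ a(φ, e_p^k) = τ r_p^k(φ) − τ (C e_y^k, C φ)_D for all φ ∈ Y and k = 1,…,K. Then τ Σ_{k=1}^K ‖e_p^k‖_Y² ≤ (2τ/α_LB²) Σ_{k=1}^K ‖r_p^k‖_{Y'}² + 2 (γ_c/α_LB)² · τ Σ_{k=1}^K ‖C e_y^k‖_D². -/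
set_option autoImplicit false

open Finset RealInnerProductSpace

/-!
Test the `k`-th equation with `φ = e_p^k`. The time increment dominates half of
`‖e_p^k‖_H² - ‖e_p^{k+1}‖_H²`, which telescopes, while Young's inequality, with a quarter of the
coercive term `α_LB ‖e_p^k‖_Y²` spent on each of the two data terms, leaves half of that term on
the left.
-/

theorem dualNorm_norm_univ_eq_opNorm {Y : Type*} [NormedAddCommGroup Y] [NormedSpace ℝ Y]
    (r : StrongDual ℝ Y) : dualNorm (fun v : Y => ‖v‖) Set.univ r = ‖r‖ := by
  have quotient_le (v : Y) : r v / ‖v‖ ≤ ‖r‖ :=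
    (div_le_div_of_nonneg_right (le_abs_self _) (norm_nonneg v)).trans (r.ratio_le_opNorm v)
  refine le_antisymm (Real.sSup_le ?_ (norm_nonneg r)) ?_
  · rintro _ ⟨v, -, -, rfl⟩
    exact quotient_le v
  have le_dual {v : Y} (hv : v ≠ 0) : r v / ‖v‖ ≤ dualNorm (fun v : Y => ‖v‖) Set.univ r :=
    le_csSup ⟨‖r‖, by rintro _ ⟨w, -, -, rfl⟩; exact quotient_le w⟩ ⟨v, trivial, hv, rfl⟩
  have abs_le_dual {v : Y} (hv : v ≠ 0) :
      |r v| / ‖v‖ ≤ dualNorm (fun v : Y => ‖v‖) Set.univ r := by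
    rcases abs_choice (r v) with h | h <;> rw [h]
    · exact le_dual hv
    · simpa using le_dual (neg_ne_zero.mpr hv)
  have dual_nonneg : 0 ≤ dualNorm (fun v : Y => ‖v‖) Set.univ r := by
    rcases subsingleton_or_nontrivial Y with hY | hY
    · simp [dualNorm, Subsingleton.elim _ (0 : Y)]
    · obtain ⟨v, hv⟩ := exists_ne (0 : Y)
      exact (by positivity : 0 ≤ |r v| / ‖v‖).trans (abs_le_dual hv)
  refine r.opNorm_le_bound' dual_nonneg fun v hv => ?_
  exact (div_le_iff₀ (by positivity)).mp (abs_le_dual (norm_ne_zero_iff.mp hv))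

theorem mul_le_sq_div_add_mul_sq_div_four {α : ℝ} (hα : 0 < α) (b x : ℝ) :
    b * x ≤ b ^ 2 / α + α * x ^ 2 / 4 := by
  have square_eq : b ^ 2 / α + α * x ^ 2 / 4 - b * x = (b - α * x / 2) ^ 2 / α := by
    field_simp
    ring
  have square_nonneg : 0 ≤ (b - α * x / 2) ^ 2 / α := by positivity
  linarith

theorem norm_sq_sub_norm_sq_le_two_mul_inner_sub {H : Type*} [SeminormedAddCommGroup H]
    [InnerProductSpace ℝ H] (x y : H) : ‖x‖ ^ 2 - ‖y‖ ^ 2 ≤ 2 * ⟪x, x - y⟫ := by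
  have polarization := norm_sub_sq_real x y
  rw [inner_sub_right, real_inner_self_eq_norm_sq]
  linarith [sq_nonneg ‖x - y‖]

theorem apply_sub_inner_le_sq_div_add {Y D : Type*} [SeminormedAddCommGroup Y] [NormedSpace ℝ Y]
    [SeminormedAddCommGroup D] [InnerProductSpace ℝ D] {α γ : ℝ} (hα : 0 < α)
    (r : StrongDual ℝ Y) {v : Y} {d c : D} (hc : ‖c‖ ≤ γ * ‖v‖) :
    r v - ⟪d, c⟫ ≤ (‖r‖ ^ 2 + (γ * ‖d‖) ^ 2) / α + α * ‖v‖ ^ 2 / 2 := by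
  have functional_le : r v ≤ ‖r‖ * ‖v‖ := (le_abs_self _).trans (r.le_opNorm v)
  have inner_le : -⟪d, c⟫ ≤ (γ * ‖d‖) * ‖v‖ :=
    calc -⟪d, c⟫ ≤ ‖d‖ * ‖c‖ := (neg_le_abs _).trans (abs_real_inner_le_norm d c)
      _ ≤ ‖d‖ * (γ * ‖v‖) := by gcongr
      _ = (γ * ‖d‖) * ‖v‖ := by ring
  have young_r := mul_le_sq_div_add_mul_sq_div_four hα ‖r‖ ‖v‖
  have young_d := mul_le_sq_div_add_mul_sq_div_four hα (γ * ‖d‖) ‖v‖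
  rw [add_div]
  linarith

theorem norm_sq_div_add_le_of_inner_sub_add_eq {H : Type*} [SeminormedAddCommGroup H]
    [InnerProductSpace ℝ H] {x y : H} {τ α A f g s : ℝ} (hτ : 0 ≤ τ) (hα : 0 < α)
    (hstep : ⟪x, x - y⟫ + τ * A = τ * f) (hA : α * s ≤ A) (hf : f ≤ g / α + α * s / 2) :
    ‖x‖ ^ 2 / α + τ * s ≤ ‖y‖ ^ 2 / α + 2 * τ / α ^ 2 * g := by
  have increment := norm_sq_sub_norm_sq_le_two_mul_inner_sub x y
  have dissipation : τ * (f - A) ≤ τ * (g / α - α * s / 2) :=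
    mul_le_mul_of_nonneg_left (by linarith) hτ
  have energy : ‖x‖ ^ 2 + α * τ * s ≤ ‖y‖ ^ 2 + 2 * τ * (g / α) := by linarith
  calc ‖x‖ ^ 2 / α + τ * s = (‖x‖ ^ 2 + α * τ * s) / α := by field_simp
    _ ≤ (‖y‖ ^ 2 + 2 * τ * (g / α)) / α := by gcongr
    _ = ‖y‖ ^ 2 / α + 2 * τ / α ^ 2 * g := by field_simp

theorem adjoint_error_energy_estimate_general
    {H Y D : Type*} [SeminormedAddCommGroup H] [InnerProductSpace ℝ H]
    [SeminormedAddCommGroup Y] [NormedSpace ℝ Y]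
    [SeminormedAddCommGroup D] [InnerProductSpace ℝ D]
    (ι : Y →ₗ[ℝ] H) (a : Y → Y → ℝ) {τ : ℝ} (hτ : 0 ≤ τ) (K : ℕ)
    {α : ℝ} (hα : 0 < α) (hcoer : ∀ v, α * ‖v‖ ^ 2 ≤ a v v)
    (C : Y → D) {γ : ℝ} (hγ : ∀ v, ‖C v‖ ≤ γ * ‖v‖) (ey ep : ℕ → Y) (rp : ℕ → StrongDual ℝ Y)
    (hadj : ∀ k, 1 ≤ k → k ≤ K → ∀ φ,
      ⟪ι φ, ι (ep k - ep (k + 1))⟫ + τ * a φ (ep k) = τ * rp k φ - τ * ⟪C (ey k), C φ⟫) :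
    ‖ι (ep 1)‖ ^ 2 / α + τ * ∑ k ∈ Icc 1 K, ‖ep k‖ ^ 2
      ≤ ‖ι (ep (K + 1))‖ ^ 2 / α + (2 * τ / α ^ 2 * ∑ k ∈ Icc 1 K, ‖rp k‖ ^ 2
        + 2 * (γ / α) ^ 2 * (τ * ∑ k ∈ Icc 1 K, ‖C (ey k)‖ ^ 2)) := by
  have step : ∀ k ∈ Icc 1 K, ‖ι (ep k)‖ ^ 2 / α + τ * ‖ep k‖ ^ 2
      ≤ ‖ι (ep (k + 1))‖ ^ 2 / α + 2 * τ / α ^ 2 * (‖rp k‖ ^ 2 + (γ * ‖C (ey k)‖) ^ 2) := by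
    intro k hk
    obtain ⟨one_le, le_K⟩ := mem_Icc.mp hk
    have tested := hadj k one_le le_K (ep k)
    rw [map_sub, ← mul_sub] at tested
    exact norm_sq_div_add_le_of_inner_sub_add_eq hτ hα tested (hcoer _)
      (apply_sub_inner_le_sq_div_add hα (rp k) (hγ _))
  have summed := sum_le_sum step
  have telescoped : ∑ k ∈ Icc 1 K, (‖ι (ep (k + 1))‖ ^ 2 / α - ‖ι (ep k)‖ ^ 2 / α)
      = ‖ι (ep (K + 1))‖ ^ 2 / α - ‖ι (ep 1)‖ ^ 2 / α := by
    rw [← Ico_add_one_right_eq_Icc, sum_Ico_sub (fun k => ‖ι (ep k)‖ ^ 2 / α) (by lia)]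
  have data_eq : 2 * τ / α ^ 2 * ∑ k ∈ Icc 1 K, (‖rp k‖ ^ 2 + (γ * ‖C (ey k)‖) ^ 2)
      = 2 * τ / α ^ 2 * ∑ k ∈ Icc 1 K, ‖rp k‖ ^ 2
        + 2 * (γ / α) ^ 2 * (τ * ∑ k ∈ Icc 1 K, ‖C (ey k)‖ ^ 2) := by
    simp only [sum_add_distrib, mul_pow, ← mul_sum]
    ring
  rw [sum_add_distrib, sum_add_distrib, ← mul_sum, ← mul_sum, data_eq] at summed
  rw [sum_sub_distrib] at telescoped
  linarith

/-- Spatio-temporal energy estimate for the adjoint error. -/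
theorem adjoint_error_energy_estimate
    {H Y D : Type*} [NormedAddCommGroup H] [InnerProductSpace ℝ H]
    [NormedAddCommGroup Y] [InnerProductSpace ℝ Y] [FiniteDimensional ℝ Y]
    [NormedAddCommGroup D] [InnerProductSpace ℝ D]
    (ι : Y →ₗ[ℝ] H) (hι : Function.Injective ι)
    (a : Y →ₗ[ℝ] (Y →ₗ[ℝ] ℝ))
    (τ : ℝ) (hτ : 0 < τ) (K : ℕ) (hK : 1 ≤ K)
    (αLB : ℝ) (hαLB : 0 < αLB) (hcoer : ∀ v : Y, αLB * ‖v‖ ^ 2 ≤ a v v)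
    (C : Y →ₗ[ℝ] D) (γc : ℝ) (hγc : ∀ v : Y, ‖C v‖ ≤ γc * ‖v‖)
    (ey ep : ℕ → Y)
    (rp : ℕ → (Y →ₗ[ℝ] ℝ))
    (hfin : ep (K + 1) = 0)
    (hadj : ∀ k, 1 ≤ k → k ≤ K → ∀ φ : Y,
      ⟪ι φ, ι (ep k - ep (k + 1))⟫ + τ * a φ (ep k)
        = τ * rp k φ - τ * ⟪C (ey k), C φ⟫) :
    τ * ∑ k ∈ Icc 1 K, ‖ep k‖ ^ 2
      ≤ 2 * τ / αLB ^ 2 * ∑ k ∈ Icc 1 K, (dualNorm (fun v : Y => ‖v‖) Set.univ ⇑(rp k)) ^ 2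
        + 2 * (γc / αLB) ^ 2 * (τ * ∑ k ∈ Icc 1 K, ‖C (ey k)‖ ^ 2) := by
  refine (le_add_of_nonneg_left (by positivity : 0 ≤ ‖ι (ep 1)‖ ^ 2 / αLB)).trans ?_
  simpa [hfin, ← dualNorm_norm_univ_eq_opNorm] using
    adjoint_error_energy_estimate_general ι (a · ·) hτ.le K hαLB hcoer C hγc ey ep
      (fun k => (rp k).toContinuousLinearMap) hadj
end

section
/- Strong-constraint quadratic inequality for the control error (inequality (eq:shorterineq)). Suppose e_y^0,…,e_y^K ∈ Y, e_p^1,…,e_p^{K+1} ∈ Y and e_u ∈ U, together with linear functionals r_y^1,…,r_y^K and r_p^1,…,r_p^K on Y and r_u on U, satisfy: (i) m(e_y^k − e_y^{k−1}, φ) + τ a(e_y^k, φ) = τ r_y^k(φ) for all φ ∈ Y and k = 1,…,K; (ii) m(φ, e_p^k − e_p^{k+1}) + τ a(φ, e_p^k) = τ r_p^k(φ) − τ (C e_y^k, C φ)_D for all φ ∈ Y and k = 1,…,K; (iii) (e_u, ψ)_U − m(ψ, e_p^1) = r_u(ψ) for all ψ ∈ U; with e_p^{K+1} = 0 and e_y^0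 = e_u. Set R_y = (τ Σ_{k=1}^K ‖r_y^k‖_{Y'}²)^{1/2} and R_p = (τ Σ_{k=1}^K ‖r_p^k‖_{Y'}²)^{1/2}. Then ‖e_u‖_U² ≤ ‖r_u‖_{U'} ‖e_u‖_U + α_LB^{−1/2} R_p ‖e_u‖_U + ((√2 + 1)/α_LB) R_y R_p + (γ_c²/(2 α_LB²)) R_y². -/
set_option autoImplicit false

open Finset RealInnerProductSpace

/-!
The adjoint error equation is the state error equation run backwards in time, so testing the state
equation with `ep k` and the adjoint equation with `ey k` and summing cancels both the form `a` and
all intermediate time differences. What remains expresses `⟪ι eu, ι (ep 1)⟫` through the residuals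
and the term `- τ ∑ ‖C (ey k)‖ ^ 2`, which has a favourable sign. Testing each equation with its
own solution bounds the discrete-in-time norms of `ey` and `ep`; the bound for `ep` involves that
of `C ey`, which Young's inequality absorbs into the favourable term.
-/

section DualNorm

lemma le_dualNorm_mul {Y : Type*} [Zero Y] {nrm : Y → ℝ} {S : Set Y} {r : Y → ℝ} {c : ℝ}
    (hpos : ∀ v ∈ S, v ≠ 0 → 0 < nrm v) (hr : ∀ v ∈ S, v ≠ 0 → r v ≤ c * nrm v)
    {v : Y} (hv : v ∈ S) (hv0 : v ≠ 0) : r v ≤ dualNorm nrm S r * nrm v := by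
  rw [← div_le_iff₀ (hpos v hv hv0)]
  refine le_csSup ⟨c, ?_⟩ ⟨v, hv, hv0, rfl⟩
  rintro _ ⟨w, hw, hw0, rfl⟩
  exact (div_le_iff₀ (hpos w hw hw0)).2 (hr w hw hw0)

variable {Y H : Type*} [NormedAddCommGroup Y] [NormedSpace ℝ Y] [FiniteDimensional ℝ Y]
  [NormedAddCommGroup H] [NormedSpace ℝ H]

lemma exists_forall_apply_le_mul_norm_of_injective {j : Y →ₗ[ℝ] H} (hj : Function.Injective j)
    (r : Y →ₗ[ℝ] ℝ) : ∃ c, ∀ v, r v ≤ c * ‖j v‖ := by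
  obtain ⟨L, -, hL⟩ := j.exists_antilipschitzWith (LinearMap.ker_eq_bot.2 hj)
  refine ⟨‖r.toContinuousLinearMap‖ * L, fun v => ?_⟩
  calc r v ≤ ‖r.toContinuousLinearMap‖ * ‖v‖ :=
        (le_abs_self _).trans (r.toContinuousLinearMap.le_opNorm v)
    _ ≤ ‖r.toContinuousLinearMap‖ * (L * ‖j v‖) := by
        gcongr
        exact hL.le_mul_norm (map_zero j) v
    _ = ‖r.toContinuousLinearMap‖ * L * ‖j v‖ := (mul_assoc ..).symm

lemma apply_le_dualNorm_mul_norm {j : Y →ₗ[ℝ] H} (hj : Function.Injective j) {S : Set Y}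
    (r : Y →ₗ[ℝ] ℝ) {v : Y} (hv : v ∈ S) :
    r v ≤ dualNorm (fun w : Y => ‖j w‖) S ⇑r * ‖j v‖ := by
  obtain ⟨c, hc⟩ := exists_forall_apply_le_mul_norm_of_injective hj r
  rcases eq_or_ne v 0 with rfl | hv0
  · simp
  · exact le_dualNorm_mul
      (fun w _ hw => norm_pos_iff.2 ((map_ne_zero_iff j hj).2 hw)) (fun w _ _ => hc w) hv hv0

lemma abs_apply_le_dualNorm_univ_mul_norm (r : Y →ₗ[ℝ] ℝ) (v : Y) :
    |r v| ≤ dualNorm (fun w : Y => ‖w‖) Set.univ ⇑r * ‖v‖ := by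
  have bound (w : Y) : r w ≤ dualNorm (fun w : Y => ‖w‖) Set.univ ⇑r * ‖w‖ :=
    apply_le_dualNorm_mul_norm (j := LinearMap.id) Function.injective_id r (Set.mem_univ w)
  exact abs_le'.2 ⟨bound v, by simpa using bound (-v)⟩

end DualNorm

section WeightedL2Norm

/-- The `ℓ²` norm over `s` in which every index has weight `τ`. For a time step `τ` it is the
discrete counterpart of the `L²` norm in time. -/
noncomputable def weightedL2Norm {κ : Type*} (τ : ℝ) (s : Finset κ) (f : κ → ℝ) : ℝ :=
  √(τ * ∑ i ∈ s, f i ^ 2)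

variable {κ : Type*} {τ : ℝ} {s : Finset κ} {f g : κ → ℝ}

lemma weightedL2Norm_nonneg : 0 ≤ weightedL2Norm τ s f :=
  Real.sqrt_nonneg _

lemma sq_weightedL2Norm (hτ : 0 ≤ τ) : weightedL2Norm τ s f ^ 2 = τ * ∑ i ∈ s, f i ^ 2 :=
  Real.sq_sqrt (by positivity)

lemma weightedL2Norm_le_mul (hτ : 0 ≤ τ) {c : ℝ} (hc : 0 ≤ c)
    (h : ∀ i ∈ s, |f i| ≤ c * |g i|) : weightedL2Norm τ s f ≤ c * weightedL2Norm τ s g := by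
  refine Real.sqrt_le_iff.2 ⟨mul_nonneg hc weightedL2Norm_nonneg, ?_⟩
  calc τ * ∑ i ∈ s, f i ^ 2 ≤ τ * ∑ i ∈ s, c ^ 2 * g i ^ 2 := by
        gcongr with i hi
        simpa only [mul_pow, sq_abs] using pow_le_pow_left₀ (abs_nonneg _) (h i hi) 2
    _ = (c * weightedL2Norm τ s g) ^ 2 := by
        rw [mul_pow, sq_weightedL2Norm hτ, ← mul_sum, mul_left_comm]

lemma abs_mul_sum_le_weightedL2Norm_mul (hτ : 0 ≤ τ) {x : κ → ℝ}
    (h : ∀ i ∈ s, |x i| ≤ f i * g i) :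
    |τ * ∑ i ∈ s, x i| ≤ weightedL2Norm τ s f * weightedL2Norm τ s g := by
  calc |τ * ∑ i ∈ s, x i| = τ * |∑ i ∈ s, x i| := by rw [abs_mul, abs_of_nonneg hτ]
    _ ≤ τ * ∑ i ∈ s, f i * g i := by
        gcongr
        exact (abs_sum_le_sum_abs _ _).trans (sum_le_sum h)
    _ ≤ τ * (√(∑ i ∈ s, f i ^ 2) * √(∑ i ∈ s, g i ^ 2)) := by
        gcongr
        exact Real.sum_mul_le_sqrt_mul_sqrt s f g
    _ = weightedL2Norm τ s f * weightedL2Norm τ s g := by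
        rw [weightedL2Norm, weightedL2Norm, Real.sqrt_mul hτ, Real.sqrt_mul hτ,
          mul_mul_mul_comm, Real.mul_self_sqrt hτ]

end WeightedL2Norm

lemma le_add_of_sq_le_mul_add_sq {x b c : ℝ} (hb : 0 ≤ b) (hc : 0 ≤ c)
    (h : x ^ 2 ≤ b * x + c ^ 2) : x ≤ b + c := by
  by_contra! hx
  nlinarith [mul_pos (show 0 < x by linarith) (sub_pos.2 hx),
    mul_nonneg hc (show 0 ≤ x - c by linarith)]

lemma half_sq_norm_sub_sq_norm_le_inner_sub {H : Type*} [SeminormedAddCommGroup H]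
    [InnerProductSpace ℝ H] (x y : H) : (‖x‖ ^ 2 - ‖y‖ ^ 2) / 2 ≤ ⟪x, x - y⟫ := by
  rw [inner_sub_right, real_inner_self_eq_norm_sq]
  linarith [norm_sub_sq_real x y, sq_nonneg ‖x - y‖]

lemma sum_Icc_one_sub {M : Type*} [AddCommGroup M] (f : ℕ → M) (K : ℕ) :
    ∑ k ∈ Icc 1 K, (f (k + 1) - f k) = f (K + 1) - f 1 := by
  rw [← Ico_add_one_right_eq_Icc, sum_Ico_sub f (Nat.le_add_left 1 K)]

section ErrorEquations

variable {H Y D : Type*} [SeminormedAddCommGroup H] [InnerProductSpace ℝ H]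
  [SeminormedAddCommGroup Y] [NormedSpace ℝ Y]
  [SeminormedAddCommGroup D] [InnerProductSpace ℝ D]

/-- The implicit Euler error equation for the state: `e` solves `K` steps of size `τ`, driven by
the residuals `r 1, …, r K`. -/
def StateErrorEquation (ι : Y →ₗ[ℝ] H) (a : Y →ₗ[ℝ] Y →ₗ[ℝ] ℝ) (τ : ℝ) (K : ℕ) (e : ℕ → Y)
    (r : ℕ → Y →ₗ[ℝ] ℝ) : Prop :=
  ∀ k, 1 ≤ k → k ≤ K → ∀ φ, ⟪ι (e k - e (k - 1)), ι φ⟫ + τ * a (e k) φ = τ * r k φ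

/-- The backward-in-time error equation for the adjoint `p`, driven by the residuals
`r 1, …, r K` and by the observations `C (y k)` of the state error `y`. -/
def AdjointErrorEquation (ι : Y →ₗ[ℝ] H) (a : Y →ₗ[ℝ] Y →ₗ[ℝ] ℝ) (C : Y →ₗ[ℝ] D) (τ : ℝ) (K : ℕ)
    (y p : ℕ → Y) (r : ℕ → Y →ₗ[ℝ] ℝ) : Prop :=
  ∀ k, 1 ≤ k → k ≤ K → ∀ φ,
    ⟪ι φ, ι (p k - p (k + 1))⟫ + τ * a φ (p k) = τ * r k φ - τ * ⟪C (y k), C φ⟫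

variable {ι : Y →ₗ[ℝ] H} {a : Y →ₗ[ℝ] Y →ₗ[ℝ] ℝ} {C : Y →ₗ[ℝ] D} {τ α γ : ℝ} {K : ℕ}
  {y p : ℕ → Y} {r ry rp : ℕ → Y →ₗ[ℝ] ℝ} {ρ ρy ρp : ℕ → ℝ}

lemma StateErrorEquation.energy_le (h : StateErrorEquation ι a τ K y r) (hτ : 0 ≤ τ)
    (ha : ∀ v, α * ‖v‖ ^ 2 ≤ a v v) :
    α * weightedL2Norm τ (Icc 1 K) (fun k => ‖y k‖) ^ 2
      ≤ ‖ι (y 0)‖ ^ 2 / 2 + τ * ∑ k ∈ Icc 1 K, r k (y k) := by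
  have step (k) (hk : k ∈ Icc 1 K) :
      τ * (α * ‖y k‖ ^ 2) ≤ τ * r k (y k) - (‖ι (y k)‖ ^ 2 / 2 - ‖ι (y (k - 1))‖ ^ 2 / 2) := by
    obtain ⟨h1k, hkK⟩ := mem_Icc.1 hk
    rw [← h k h1k hkK, real_inner_comm, map_sub]
    linarith [half_sq_norm_sub_sq_norm_le_inner_sub (ι (y k)) (ι (y (k - 1))),
      mul_le_mul_of_nonneg_left (ha (y k)) hτ]
  have telescope := sum_Icc_one_sub (fun k => ‖ι (y (k - 1))‖ ^ 2 / 2) K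
  simp only [Nat.add_sub_cancel, Nat.sub_self] at telescope
  have total := sum_le_sum step
  rw [sum_sub_distrib, telescope, ← mul_sum, ← mul_sum, ← mul_sum] at total
  rw [sq_weightedL2Norm hτ]
  linarith [sq_nonneg ‖ι (y K)‖]

lemma StateErrorEquation.weightedL2Norm_le (h : StateErrorEquation ι a τ K y r) (hτ : 0 ≤ τ)
    (hα : 0 < α) (ha : ∀ v, α * ‖v‖ ^ 2 ≤ a v v) (hr : ∀ k v, |r k v| ≤ ρ k * ‖v‖) :
    weightedL2Norm τ (Icc 1 K) (fun k => ‖y k‖)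
      ≤ weightedL2Norm τ (Icc 1 K) ρ / α + ‖ι (y 0)‖ / √(2 * α) := by
  set N := weightedL2Norm τ (Icc 1 K) (fun k => ‖y k‖)
  set R := weightedL2Norm τ (Icc 1 K) ρ
  have hR : 0 ≤ R := weightedL2Norm_nonneg
  have residual : τ * ∑ k ∈ Icc 1 K, r k (y k) ≤ R * N :=
    (abs_le.1 (abs_mul_sum_le_weightedL2Norm_mul hτ fun k _ => hr k (y k))).2
  refine le_add_of_sq_le_mul_add_sq (by positivity) (by positivity) ?_
  rw [div_pow, Real.sq_sqrt (by positivity), ← mul_le_mul_iff_right₀ hα]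
  calc α * N ^ 2 ≤ ‖ι (y 0)‖ ^ 2 / 2 + R * N := by linarith [h.energy_le hτ ha]
    _ = α * (R / α * N + ‖ι (y 0)‖ ^ 2 / (2 * α)) := by field

lemma AdjointErrorEquation.energy_le (h : AdjointErrorEquation ι a C τ K y p r) (hτ : 0 ≤ τ)
    (ha : ∀ v, α * ‖v‖ ^ 2 ≤ a v v) (hp : p (K + 1) = 0) :
    α * weightedL2Norm τ (Icc 1 K) (fun k => ‖p k‖) ^ 2
      ≤ τ * ∑ k ∈ Icc 1 K, r k (p k) - τ * ∑ k ∈ Icc 1 K, ⟪C (y k), C (p k)⟫ := by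
  have step (k) (hk : k ∈ Icc 1 K) :
      τ * (α * ‖p k‖ ^ 2) ≤ τ * r k (p k) - τ * ⟪C (y k), C (p k)⟫
        + (‖ι (p (k + 1))‖ ^ 2 / 2 - ‖ι (p k)‖ ^ 2 / 2) := by
    obtain ⟨h1k, hkK⟩ := mem_Icc.1 hk
    rw [← h k h1k hkK, map_sub]
    linarith [half_sq_norm_sub_sq_norm_le_inner_sub (ι (p k)) (ι (p (k + 1))),
      mul_le_mul_of_nonneg_left (ha (p k)) hτ]
  have telescope := sum_Icc_one_sub (fun k => ‖ι (p k)‖ ^ 2 / 2) K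
  simp only [hp, map_zero, norm_zero] at telescope
  have total := sum_le_sum step
  rw [sum_add_distrib, telescope, sum_sub_distrib, ← mul_sum, ← mul_sum, ← mul_sum,
    ← mul_sum] at total
  rw [sq_weightedL2Norm hτ]
  linarith [sq_nonneg ‖ι (p 1)‖]

lemma AdjointErrorEquation.weightedL2Norm_le (h : AdjointErrorEquation ι a C τ K y p r)
    (hτ : 0 ≤ τ) (hα : 0 < α) (ha : ∀ v, α * ‖v‖ ^ 2 ≤ a v v) (hγ : 0 ≤ γ)
    (hC : ∀ v, ‖C v‖ ≤ γ * ‖v‖) (hr : ∀ k v, |r k v| ≤ ρ k * ‖v‖) (hp : p (K + 1) = 0) :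
    weightedL2Norm τ (Icc 1 K) (fun k => ‖p k‖)
      ≤ (weightedL2Norm τ (Icc 1 K) ρ
          + γ * weightedL2Norm τ (Icc 1 K) (fun k => ‖C (y k)‖)) / α := by
  set P := weightedL2Norm τ (Icc 1 K) (fun k => ‖p k‖)
  set R := weightedL2Norm τ (Icc 1 K) ρ
  set O := weightedL2Norm τ (Icc 1 K) (fun k => ‖C (y k)‖)
  have hR : 0 ≤ R := weightedL2Norm_nonneg
  have hO : 0 ≤ O := weightedL2Norm_nonneg
  have residual : τ * ∑ k ∈ Icc 1 K, r k (p k) ≤ R * P :=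
    (abs_le.1 (abs_mul_sum_le_weightedL2Norm_mul hτ fun k _ => hr k (p k))).2
  have observation : -(O * (γ * P)) ≤ τ * ∑ k ∈ Icc 1 K, ⟪C (y k), C (p k)⟫ := by
    have cauchy_schwarz := (abs_le.1 (abs_mul_sum_le_weightedL2Norm_mul (s := Icc 1 K) hτ
      fun k _ => abs_real_inner_le_norm (C (y k)) (C (p k)))).1
    refine (neg_le_neg (mul_le_mul_of_nonneg_left ?_ hO)).trans cauchy_schwarz
    exact weightedL2Norm_le_mul hτ hγ fun k _ => by simpa only [abs_norm] using hC (p k)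
  suffices P ≤ (R + γ * O) / α + 0 by simpa only [add_zero] using this
  refine le_add_of_sq_le_mul_add_sq (by positivity) le_rfl ?_
  rw [← mul_le_mul_iff_right₀ hα]
  calc α * P ^ 2 ≤ R * P + O * (γ * P) := by linarith [h.energy_le hτ ha hp]
    _ = α * ((R + γ * O) / α * P + 0 ^ 2) := by field

lemma StateErrorEquation.inner_eq (hy : StateErrorEquation ι a τ K y ry)
    (hp : AdjointErrorEquation ι a C τ K y p rp) (hfin : p (K + 1) = 0) :
    ⟪ι (y 0), ι (p 1)⟫ = τ * ∑ k ∈ Icc 1 K, rp k (y k) - τ * ∑ k ∈ Icc 1 K, ry k (p k)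
      - τ * ∑ k ∈ Icc 1 K, ‖C (y k)‖ ^ 2 := by
  have step (k) (hk : k ∈ Icc 1 K) : ⟪ι (y k), ι (p (k + 1))⟫ - ⟪ι (y (k - 1)), ι (p k)⟫
      = τ * ry k (p k) - τ * rp k (y k) + τ * ‖C (y k)‖ ^ 2 := by
    obtain ⟨h1k, hkK⟩ := mem_Icc.1 hk
    have state := hy k h1k hkK (p k)
    have adjoint := hp k h1k hkK (y k)
    rw [map_sub, inner_sub_left] at state
    rw [map_sub, inner_sub_right, real_inner_self_eq_norm_sq] at adjoint
    linarith
  have telescope := sum_Icc_one_sub (fun k => ⟪ι (y (k - 1)), ι (p k)⟫) K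
  simp only [Nat.add_sub_cancel, Nat.sub_self, hfin, map_zero, inner_zero_right] at telescope
  rw [sum_congr rfl step, sum_add_distrib, sum_sub_distrib, ← mul_sum, ← mul_sum,
    ← mul_sum] at telescope
  linarith

lemma StateErrorEquation.inner_le (hy : StateErrorEquation ι a τ K y ry)
    (hp : AdjointErrorEquation ι a C τ K y p rp) (hfin : p (K + 1) = 0) (hτ : 0 ≤ τ)
    (hry : ∀ k v, |ry k v| ≤ ρy k * ‖v‖) (hrp : ∀ k v, |rp k v| ≤ ρp k * ‖v‖) :
    ⟪ι (y 0), ι (p 1)⟫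
      ≤ weightedL2Norm τ (Icc 1 K) ρp * weightedL2Norm τ (Icc 1 K) (fun k => ‖y k‖)
        + weightedL2Norm τ (Icc 1 K) ρy * weightedL2Norm τ (Icc 1 K) (fun k => ‖p k‖)
        - weightedL2Norm τ (Icc 1 K) (fun k => ‖C (y k)‖) ^ 2 := by
  have adjoint_residual := (abs_le.1 (abs_mul_sum_le_weightedL2Norm_mul (s := Icc 1 K) hτ
    fun k _ => hrp k (y k))).2
  have state_residual := (abs_le.1 (abs_mul_sum_le_weightedL2Norm_mul (s := Icc 1 K) hτ
    fun k _ => hry k (p k))).1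
  rw [hy.inner_eq hp hfin, sq_weightedL2Norm hτ]
  linarith

theorem strong_constraint_quadratic_inequality_general
    (hy : StateErrorEquation ι a τ K y ry) (hp : AdjointErrorEquation ι a C τ K y p rp)
    (hfin : p (K + 1) = 0) (hτ : 0 ≤ τ) (hα : 0 < α) (ha : ∀ v, α * ‖v‖ ^ 2 ≤ a v v)
    (hC : ∀ v, ‖C v‖ ≤ γ * ‖v‖)
    (hry : ∀ k v, |ry k v| ≤ ρy k * ‖v‖) (hrp : ∀ k v, |rp k v| ≤ ρp k * ‖v‖)
    {U : Submodule ℝ Y} (hU : y 0 ∈ U) {ru : Y →ₗ[ℝ] ℝ} {ρu : ℝ}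
    (hopt : ∀ ψ ∈ U, ⟪ι (y 0), ι ψ⟫ - ⟪ι ψ, ι (p 1)⟫ = ru ψ)
    (hru : ∀ ψ ∈ U, ru ψ ≤ ρu * ‖ι ψ‖) :
    ‖ι (y 0)‖ ^ 2
      ≤ ρu * ‖ι (y 0)‖ + (1 / √(2 * α)) * weightedL2Norm τ (Icc 1 K) ρp * ‖ι (y 0)‖
        + (2 / α) * weightedL2Norm τ (Icc 1 K) ρy * weightedL2Norm τ (Icc 1 K) ρp
        + γ ^ 2 / (4 * α ^ 2) * weightedL2Norm τ (Icc 1 K) ρy ^ 2 := by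
  have state := hy.weightedL2Norm_le hτ hα ha hry
  have adjoint := hp.weightedL2Norm_le hτ hα ha (abs_nonneg γ)
    (fun v => (hC v).trans (by gcongr; exact le_abs_self γ)) hrp hfin
  have duality := hy.inner_le hp hfin hτ hry hrp
  set Ry := weightedL2Norm τ (Icc 1 K) ρy
  set Rp := weightedL2Norm τ (Icc 1 K) ρp
  set O := weightedL2Norm τ (Icc 1 K) (fun k => ‖C (y k)‖)
  set E := ‖ι (y 0)‖
  have hRy : 0 ≤ Ry := weightedL2Norm_nonneg
  have hRp : 0 ≤ Rp := weightedL2Norm_nonneg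
  have optimality : E ^ 2 ≤ ρu * E + ⟪ι (y 0), ι (p 1)⟫ := by
    have tested := hopt (y 0) hU
    rw [real_inner_self_eq_norm_sq] at tested
    linarith [hru (y 0) hU]
  have young : Ry * (|γ| * O) / α - O ^ 2 ≤ γ ^ 2 / (4 * α ^ 2) * Ry ^ 2 := by
    have square : γ ^ 2 / (4 * α ^ 2) * Ry ^ 2 - (Ry * (|γ| * O) / α - O ^ 2)
        = (|γ| * Ry / (2 * α) - O) ^ 2 := by
      rw [← sq_abs γ]
      field
    linarith [sq_nonneg (|γ| * Ry / (2 * α) - O)]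
  calc E ^ 2 ≤ ρu * E + (Rp * (Ry / α + E / √(2 * α)) + Ry * ((Rp + |γ| * O) / α) - O ^ 2) := by
        linarith [mul_le_mul_of_nonneg_left state hRp, mul_le_mul_of_nonneg_left adjoint hRy]
    _ = ρu * E + (1 / √(2 * α)) * Rp * E + (2 / α) * Ry * Rp
        + (Ry * (|γ| * O) / α - O ^ 2) := by ring
    _ ≤ _ := by gcongr

end ErrorEquations

/-- Strong-constraint quadratic inequality for the control error. -/
theorem strong_constraint_quadratic_inequality
    {H Y D : Type*} [NormedAddCommGroup H] [InnerProductSpace ℝ H]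
    [NormedAddCommGroup Y] [InnerProductSpace ℝ Y] [FiniteDimensional ℝ Y]
    [NormedAddCommGroup D] [InnerProductSpace ℝ D]
    (ι : Y →ₗ[ℝ] H) (hι : Function.Injective ι)
    (U : Submodule ℝ Y)
    (a : Y →ₗ[ℝ] (Y →ₗ[ℝ] ℝ))
    (τ : ℝ) (hτ : 0 < τ) (K : ℕ) (hK : 1 ≤ K)
    (αLB : ℝ) (hαLB : 0 < αLB) (hcoer : ∀ v : Y, αLB * ‖v‖ ^ 2 ≤ a v v)
    (C : Y →ₗ[ℝ] D) (γc : ℝ) (hγc : ∀ v : Y, ‖C v‖ ≤ γc * ‖v‖)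
    (ey ep : ℕ → Y) (eu : Y) (heu : eu ∈ U)
    (ry rp : ℕ → (Y →ₗ[ℝ] ℝ)) (ru : Y →ₗ[ℝ] ℝ)
    (hstate : ∀ k, 1 ≤ k → k ≤ K → ∀ φ : Y,
      ⟪ι (ey k - ey (k - 1)), ι φ⟫ + τ * a (ey k) φ = τ * ry k φ)
    (hadj : ∀ k, 1 ≤ k → k ≤ K → ∀ φ : Y,
      ⟪ι φ, ι (ep k - ep (k + 1))⟫ + τ * a φ (ep k)
        = τ * rp k φ - τ * ⟪C (ey k), C φ⟫)
    (hopt : ∀ ψ ∈ U, ⟪ι eu, ι ψ⟫ - ⟪ι ψ, ι (ep 1)⟫ = ru ψ)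
    (hfin : ep (K + 1) = 0) (hinit : ey 0 = eu)
    (Ry Rp : ℝ)
    (hRy : Ry = Real.sqrt (τ * ∑ k ∈ Icc 1 K, (dualNorm (fun v : Y => ‖v‖) Set.univ ⇑(ry k)) ^ 2))
    (hRp : Rp = Real.sqrt (τ * ∑ k ∈ Icc 1 K, (dualNorm (fun v : Y => ‖v‖) Set.univ ⇑(rp k)) ^ 2)) :
    ‖ι eu‖ ^ 2
      ≤ dualNorm (fun v : Y => ‖ι v‖) (U : Set Y) ⇑ru * ‖ι eu‖ + (1 / Real.sqrt αLB) * Rp * ‖ι eu‖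
        + ((Real.sqrt 2 + 1) / αLB) * Ry * Rp + γc ^ 2 / (2 * αLB ^ 2) * Ry ^ 2 := by
  subst hRy hRp hinit
  refine (strong_constraint_quadratic_inequality_general hstate hadj hfin hτ.le hαLB hcoer hγc
    (fun k => abs_apply_le_dualNorm_univ_mul_norm (ry k))
    (fun k => abs_apply_le_dualNorm_univ_mul_norm (rp k)) heu hopt
    (fun ψ hψ => apply_le_dualNorm_mul_norm hι ru hψ)).trans ?_
  unfold weightedL2Norm
  gcongr
  · linarith
  · linarith [Real.one_le_sqrt.2 (one_le_two (α := ℝ))]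
  · norm_num
end
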